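/- Suppose a prediction set Ĉ_{n,α} satisfies the uniform finite-sample coverage guarantee sup_{P ∈ P_SI} P_P(Δ ∉ Ĉ_{n,α}(X)) ≤ α for some α ∈ (0,1). Then for every P ∈ P_SI and every y ∈ ℝ, P_P(y ∉ Ĉ_{n,α}(X)) ≤ α; consequently, for every P ∈ P_SI, E_P[length(Ĉ_{n,α}(X))] = ∞. -/

import Mathlib

/-!
STATEMENT 0 (no-free-lunch for conditional independence testing, finite sample):
If a (possibly randomized) test `ψ : D^n → [0,1]` on the full data
`(X, Y(1), Y(0), T)` has level `α` over the strong-ignorability class `P_SI`,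
then it has level `α` over the whole class `E`.
-/

open MeasureTheory ProbabilityTheory Filter

noncomputable section

/-- The full-data sample space `D = ℝ^p × ℝ² × {0,1}`. -/
abbrev FullData (p : ℕ) : Type := (Fin p → ℝ) × ℝ × ℝ × Bool

/-- Covariate coordinate. -/
def Xc {p : ℕ} (ω : FullData p) : Fin p → ℝ := ω.1

/-- Treated potential outcome coordinate `Y(1)`. -/
def Y1c {p : ℕ} (ω : FullData p) : ℝ := ω.2.1

/-- Control potential outcome coordinate `Y(0)`. -/
def Y0c {p : ℕ} (ω : FullData p) : ℝ := ω.2.2.1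

/-- Treatment coordinate `T`. -/
def Tc {p : ℕ} (ω : FullData p) : Bool := ω.2.2.2

lemma measurable_Xc {p : ℕ} : Measurable (Xc (p := p)) := measurable_fst

/-- The σ-algebra generated by the covariates `X`. -/
def mX (p : ℕ) : MeasurableSpace (FullData p) :=
  MeasurableSpace.comap Xc inferInstance

lemma mX_le (p : ℕ) : mX p ≤ (inferInstance : MeasurableSpace (FullData p)) := measurable_Xc.comap_le

/-- The class `E`: distributions of `(X, Y(1), Y(0), T)` such that at least one coordinate
of `X` has a law absolutely continuous w.r.t. Lebesgue measure, and the laws of `Y(1)` and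
`Y(0)` are atomless (continuous). -/
def memE {p : ℕ} (P : ProbabilityMeasure (FullData p)) : Prop :=
  (∃ j : Fin p,
    ((P : Measure (FullData p)).map (fun ω => Xc ω j)).AbsolutelyContinuous
      (volume : Measure ℝ)) ∧
  (∀ y : ℝ, ((P : Measure (FullData p)).map Y1c) {y} = 0) ∧
  (∀ y : ℝ, ((P : Measure (FullData p)).map Y0c) {y} = 0)

/-- The strong-ignorability class `P_SI ⊆ E`: `(Y(1), Y(0)) ⫫ T | X`. -/
def memPSI {p : ℕ} (P : ProbabilityMeasure (FullData p)) : Prop :=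
  memE P ∧
    CondIndepFun (mX p) (mX_le p) (fun ω => (Y1c ω, Y0c ω)) Tc
      (P : Measure (FullData p))


/-- The observed-data sample space: one observed unit is `(X, T, Y)`. -/
abbrev Obs (p : ℕ) : Type := (Fin p → ℝ) × Bool × ℝ

/-- The observed data of a unit: `(X, T, Y)` with `Y = T·Y(1) + (1 - T)·Y(0)`. -/
def obs {p : ℕ} (ω : FullData p) : Obs p :=
  (ω.1, ω.2.2.2, if ω.2.2.2 then ω.2.1 else ω.2.2.1)

/-- Joint law of `n + 1` i.i.d. full-data observations from `P`
(the first `n` units are the study sample, the last one is the test unit). -/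
def jointLaw {p : ℕ} (n : ℕ) (P : ProbabilityMeasure (FullData p)) :
    Measure (Fin (n + 1) → FullData p) :=
  Measure.pi fun _ : Fin (n + 1) => (P : Measure (FullData p))

/-- The observed data `O_n` extracted from `n + 1` full-data points. -/
def obsData {p : ℕ} (n : ℕ) (ω : Fin (n + 1) → FullData p) : Fin n → Obs p :=
  fun i => obs (ω i.castSucc)

/-- Covariates `X` of the test unit. -/
def testX {p : ℕ} (n : ℕ) (ω : Fin (n + 1) → FullData p) : Fin p → ℝ :=
  Xc (ω (Fin.last n))

/-- Individual treatment effect `Δ = Y(1) - Y(0)` of the test unit. -/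
def testITE {p : ℕ} (n : ℕ) (ω : Fin (n + 1) → FullData p) : ℝ :=
  Y1c (ω (Fin.last n)) - Y0c (ω (Fin.last n))

lemma condIndepFun_of_ae_eq_measurable {Ω β γ : Type*} {m m0 : MeasurableSpace Ω}
    [StandardBorelSpace Ω] {hm : m ≤ m0} {μ : Measure Ω} [IsFiniteMeasure μ]
    [MeasurableSpace β] [MeasurableSpace γ] {f : Ω → β} {g g' : Ω → γ}
    (hf : Measurable f) (hg : Measurable g) (hg' : Measurable[m] g') (h : g =ᵐ[μ] g') :
    CondIndepFun m hm f g μ := by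
  have key : CondIndepFun m hm f g' μ := condIndepFun_of_measurable_right hf hg'
  rw [condIndepFun_iff_condExp_inter_preimage_eq_mul hf (hg'.mono hm le_rfl)] at key
  rw [condIndepFun_iff_condExp_inter_preimage_eq_mul hf hg]
  intro s t hs ht
  have hcongr : ∀ A A' : Set Ω, (∀ ω, g ω = g' ω → (ω ∈ A ↔ ω ∈ A')) →
      μ⟦A | m⟧ =ᵐ[μ] μ⟦A' | m⟧ := by
    intro A A' hA
    refine condExp_congr_ae ?_
    filter_upwards [h] with ω hω
    by_cases hmem : ω ∈ A
    · rw [Set.indicator_of_mem hmem, Set.indicator_of_mem ((hA ω hω).1 hmem)]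
    · rw [Set.indicator_of_notMem hmem, Set.indicator_of_notMem (mt (hA ω hω).2 hmem)]
  have h1 := hcongr (f ⁻¹' s ∩ g ⁻¹' t) (f ⁻¹' s ∩ g' ⁻¹' t) fun ω hω => by
    rw [Set.mem_inter_iff, Set.mem_inter_iff, Set.mem_preimage (f := g), hω]; rfl
  have h2 := hcongr (g ⁻¹' t) (g' ⁻¹' t) fun ω hω => by
    rw [Set.mem_preimage, hω]; rfl
  filter_upwards [h1, h2, key s t hs ht] with ω e1 e2 e3
  rw [e1, e2, e3]

/-- The number of Boolean labellings of `κ` with prescribed values at `N` distinct points. -/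
lemma card_labellings_mul_two_pow {κ : Type*} [Fintype κ] [DecidableEq κ] {N : ℕ}
    {h : Fin N → κ} (hh : Function.Injective h) (t : Fin N → Bool) :
    (Finset.univ.filter fun ε : κ → Bool => ∀ i, t i = ε (h i)).card * 2 ^ N
      = 2 ^ Fintype.card κ := by
  let s : κ → Finset Bool := fun k => Finset.univ.filter fun b => ∀ i, h i = k → t i = b
  have hs : (Finset.univ.filter fun ε : κ → Bool => ∀ i, t i = ε (h i)) = Fintype.piFinset s := by
    ext ε
    simp only [s, Fintype.mem_piFinset, Finset.mem_filter, Finset.mem_univ, true_and]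
    exact ⟨fun H k i hi => hi ▸ H i, fun H i => H _ i rfl⟩
  have hpow : 2 ^ N = ∏ k, if k ∈ Finset.univ.image h then 2 else 1 := by
    rw [Finset.prod_ite_mem, Finset.univ_inter, Finset.prod_const,
      Finset.card_image_of_injective _ hh, Finset.card_univ, Fintype.card_fin]
  rw [hs, Fintype.card_piFinset, hpow, ← Finset.prod_mul_distrib, ← Finset.card_univ,
    ← Finset.prod_const]
  refine Finset.prod_congr rfl fun k _ => ?_
  by_cases hk : k ∈ Finset.univ.image h
  · obtain ⟨i, -, rfl⟩ := Finset.mem_image.1 hk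
    have : s (h i) = {t i} := by
      ext b
      simp only [s, Finset.mem_filter, Finset.mem_univ, true_and, Finset.mem_singleton]
      exact ⟨fun H => (H i rfl).symm, fun hb j hj => by rw [hh hj, hb]⟩
    rw [this, if_pos hk, Finset.card_singleton, one_mul]
  · have : s k = Finset.univ := by
      ext b
      simp only [s, Finset.mem_filter, Finset.mem_univ, true_and, iff_true]
      exact fun i hi => (hk (Finset.mem_image.2 ⟨i, Finset.mem_univ _, hi⟩)).elim
    rw [this, if_neg hk]
    simp

/-- If a relative bound on `A` holds on every event "the labels agree with `ε` of the hash value",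
then, averaging over `ε`, it holds for `A` itself up to the probability of a hash collision. -/
lemma measure_le_add_collision {Ω κ : Type*} [MeasurableSpace Ω] [Fintype κ]
    [MeasurableSpace κ] [DiscreteMeasurableSpace κ] {N : ℕ}
    (M : Measure (Fin N → Ω)) [IsProbabilityMeasure M] {H : Ω → κ} {T : Ω → Bool}
    (hH : Measurable H) (hT : Measurable T) {A : Set (Fin N → Ω)} (hA : MeasurableSet A)
    {a : ENNReal}
    (h : ∀ ε : κ → Bool, M (A ∩ {ω | ∀ i, T (ω i) = ε (H (ω i))})
      ≤ a * M {ω | ∀ i, T (ω i) = ε (H (ω i))}) :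
    M A ≤ a + (a * 2 ^ N + 1) * M {ω | ¬ Function.Injective fun i => H (ω i)} := by
  classical
  set B : (κ → Bool) → Set (Fin N → Ω) := fun ε => {ω | ∀ i, T (ω i) = ε (H (ω i))} with hBdef
  set G : Set (Fin N → Ω) := {ω | Function.Injective fun i => H (ω i)} with hGdef
  have hcoll : {ω : Fin N → Ω | ¬ Function.Injective fun i => H (ω i)} = Gᶜ := rfl
  have hB : ∀ ε, MeasurableSet (B ε) := fun ε => by
    have : B ε = ⋂ i, {ω | T (ω i) = ε (H (ω i))} := by ext; simp [B]
    rw [this]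
    exact MeasurableSet.iInter fun i => measurableSet_eq_fun
      (hT.comp (measurable_pi_apply i))
      ((Measurable.of_discrete (f := ε)).comp (hH.comp (measurable_pi_apply i)))
  have hG : MeasurableSet G := by
    have : G = (fun ω : Fin N → Ω => fun i => H (ω i)) ⁻¹' {v | Function.Injective v} := rfl
    rw [this]
    exact (measurable_pi_lambda _ fun i => hH.comp (measurable_pi_apply i))
      (Set.toFinite _).measurableSet
  have hsum : ∀ D : Set (Fin N → Ω), MeasurableSet D → ∑ ε, M (D ∩ B ε)
      = ∫⁻ ω in D, ((Finset.univ.filter fun ε : κ → Bool => ω ∈ B ε).card : ENNReal) ∂M := by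
    intro D hD
    have : ∀ ω, ((Finset.univ.filter fun ε : κ → Bool => ω ∈ B ε).card : ENNReal)
        = ∑ ε, (B ε).indicator 1 ω := by
      intro ω
      rw [Finset.card_filter]
      push_cast
      exact Finset.sum_congr rfl fun ε _ => by simp [Set.indicator_apply]
    simp_rw [this]
    rw [lintegral_finsetSum _ fun ε _ => measurable_one.indicator (hB ε)]
    refine Finset.sum_congr rfl fun ε _ => ?_
    rw [lintegral_indicator_one (hB ε), Measure.restrict_apply (hB ε), Set.inter_comm]
  set K : ENNReal := 2 ^ Fintype.card κ with hK
  have hK0 : K ≠ 0 := by simp [K]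
  have hKt : K ≠ ⊤ := by simp [K]
  have hcount : ∀ ω ∈ G,
      2 ^ N * ((Finset.univ.filter fun ε : κ → Bool => ω ∈ B ε).card : ENNReal) = K := by
    intro ω hω
    have := card_labellings_mul_two_pow (h := fun i => H (ω i)) hω fun i => T (ω i)
    rw [mul_comm, hK]
    exact_mod_cast this
  have hcard : ∀ ω, ((Finset.univ.filter fun ε : κ → Bool => ω ∈ B ε).card : ENNReal) ≤ K := by
    intro ω
    have := (Finset.univ.filter fun ε : κ → Bool => ω ∈ B ε).card_le_univ
    rw [Fintype.card_fun, Fintype.card_bool] at this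
    rw [hK]
    exact_mod_cast this
  have hgood : ∀ D, MeasurableSet D → D ⊆ G → 2 ^ N * ∑ ε, M (D ∩ B ε) = K * M D := by
    intro D hD hDG
    rw [hsum D hD, ← lintegral_const_mul' _ _ (by simp),
      setLIntegral_congr_fun hD fun ω hω => hcount ω (hDG hω), setLIntegral_const]
  have hbad : ∑ ε, M (Gᶜ ∩ B ε) ≤ K * M Gᶜ := by
    rw [hsum _ hG.compl]
    refine (lintegral_mono fun ω => hcard ω).trans ?_
    rw [setLIntegral_const]
  have hAG : K * M (A ∩ G) ≤ K * (a + a * 2 ^ N * M Gᶜ) := by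
    calc K * M (A ∩ G) = 2 ^ N * ∑ ε, M (A ∩ G ∩ B ε) :=
          (hgood _ (hA.inter hG) Set.inter_subset_right).symm
      _ ≤ 2 ^ N * ∑ ε, a * M (B ε) := by
          gcongr with ε
          exact (measure_mono (Set.inter_subset_inter_left _ Set.inter_subset_left)).trans (h ε)
      _ = 2 ^ N * ∑ ε, a * (M (G ∩ B ε) + M (Gᶜ ∩ B ε)) := by
          congr 1
          refine Finset.sum_congr rfl fun ε _ => ?_
          rw [← measure_inter_add_sdiff (B ε) hG, Set.inter_comm, Set.sdiff_eq,
            Set.inter_comm (B ε)]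
      _ = a * (2 ^ N * ∑ ε, M (G ∩ B ε)) + a * 2 ^ N * ∑ ε, M (Gᶜ ∩ B ε) := by
          rw [← Finset.mul_sum, Finset.sum_add_distrib]
          ring
      _ ≤ a * (K * 1) + a * 2 ^ N * (K * M Gᶜ) := by
          rw [hgood G hG subset_rfl]
          gcongr
          exact prob_le_one
      _ = K * (a + a * 2 ^ N * M Gᶜ) := by ring
  have hAG' : M (A ∩ G) ≤ a + a * 2 ^ N * M Gᶜ :=
    (ENNReal.mul_le_mul_iff_right hK0 hKt).1 hAG
  rw [hcoll]
  calc M A ≤ M (A ∩ G) + M Gᶜ := by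
        rw [← measure_inter_add_sdiff A hG]
        gcongr
        exact fun ω hω => hω.2
    _ ≤ a + a * 2 ^ N * M Gᶜ + M Gᶜ := by gcongr
    _ = a + (a * 2 ^ N + 1) * M Gᶜ := by ring

/-- Independent draws of a variable with atomless law are almost surely distinct. -/
lemma measure_pi_not_injective_eq_zero {Ω S : Type*} [MeasurableSpace Ω] [MeasurableSpace S]
    [MeasurableEq S] {N : ℕ} (μ : Measure Ω) [IsProbabilityMeasure μ] {X : Ω → S}
    (hX : Measurable X) (hatom : ∀ x, μ (X ⁻¹' {x}) = 0) :
    Measure.pi (fun _ : Fin N => μ) {ω | ¬ Function.Injective fun i => X (ω i)} = 0 := by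
  have hsub : {ω : Fin N → Ω | ¬ Function.Injective fun i => X (ω i)}
      ⊆ ⋃ i, ⋃ j, ⋃ _ : i ≠ j, {ω | X (ω i) = X (ω j)} := by
    intro ω hω
    simp only [Function.Injective, Set.mem_ofPred_eq, not_forall] at hω
    obtain ⟨i, j, hij, hne⟩ := hω
    simp only [Set.mem_iUnion]
    exact ⟨i, j, hne, hij⟩
  refine measure_mono_null hsub ?_
  simp only [measure_iUnion_null_iff]
  intro i j hij
  have hind : IndepFun (fun ω : Fin N → Ω => ω i) (fun ω => ω j) (Measure.pi fun _ => μ) :=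
    (iIndepFun_pi (X := fun _ : Fin N => (id : Ω → Ω)) (μ := fun _ => μ)
      fun _ => aemeasurable_id).indepFun hij
  rw [indepFun_iff_map_prod_eq_prod_map_map (measurable_pi_apply i).aemeasurable
    (measurable_pi_apply j).aemeasurable] at hind
  have hD : MeasurableSet {q : Ω × Ω | X q.1 = X q.2} :=
    measurableSet_eq_fun (hX.comp measurable_fst) (hX.comp measurable_snd)
  have hev : ∀ k : Fin N, (Measure.pi fun _ => μ).map (fun ω : Fin N → Ω => ω k) = μ :=
    fun k => (measurePreserving_eval (fun _ : Fin N => μ) k).map_eq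
  rw [hev, hev] at hind
  have hpre : {ω : Fin N → Ω | X (ω i) = X (ω j)}
      = (fun ω : Fin N → Ω => (ω i, ω j)) ⁻¹' {q : Ω × Ω | X q.1 = X q.2} := rfl
  rw [hpre, ← Measure.map_apply (by fun_prop) hD, hind, Measure.measure_prod_null hD]
  refine ae_of_all _ fun x => ?_
  have : Prod.mk x ⁻¹' {q : Ω × Ω | X q.1 = X q.2} = X ⁻¹' {X x} := by
    ext y; simp [eq_comm]
  simp only [this, hatom, Pi.zero_apply]

/-- The product of a conditioned measure is the conditioned product measure. -/
lemma pi_cond_eq {Ω : Type*} [MeasurableSpace Ω] {N : ℕ} (μ : Measure Ω)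
    [IsProbabilityMeasure μ] {B : Set Ω} (hB : MeasurableSet B) :
    Measure.pi (fun _ : Fin N => μ[|B])
      = (Measure.pi fun _ : Fin N => μ)[|Set.univ.pi fun _ => B] := by
  refine Measure.pi_eq fun s _ => ?_
  rw [cond_apply (MeasurableSet.univ_pi fun _ => hB), ← Set.pi_inter_distrib, Measure.pi_pi,
    Measure.pi_pi]
  simp_rw [cond_apply hB]
  rw [Finset.prod_mul_distrib, ENNReal.prod_inv_distrib]
  intro i _ j _ _
  exact Or.inr (measure_ne_top _ _)

section FullData

variable {p : ℕ}

lemma measurable_Y1c : Measurable (Y1c (p := p)) := measurable_fst.comp measurable_snd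

lemma measurable_Y0c : Measurable (Y0c (p := p)) :=
  measurable_fst.comp (measurable_snd.comp measurable_snd)

lemma measurable_Tc : Measurable (Tc (p := p)) :=
  measurable_snd.comp (measurable_snd.comp measurable_snd)

lemma measurable_Xc_apply (j : Fin p) : Measurable fun ω : FullData p => Xc ω j :=
  (measurable_pi_apply j).comp measurable_Xc

lemma measurable_obs : Measurable (obs (p := p)) :=
  measurable_Xc.prodMk (measurable_Tc.prodMk
    (Measurable.ite (measurable_Tc (measurableSet_singleton true)) measurable_Y1c measurable_Y0c))

lemma measurable_obsData (n : ℕ) : Measurable (obsData (p := p) n) :=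
  measurable_pi_lambda _ fun i => measurable_obs.comp (measurable_pi_apply i.castSucc)

lemma measurable_testX (n : ℕ) : Measurable (testX (p := p) n) :=
  measurable_Xc.comp (measurable_pi_apply (Fin.last n))

lemma measurable_testITE (n : ℕ) : Measurable (testITE (p := p) n) :=
  (measurable_Y1c.comp (measurable_pi_apply (Fin.last n))).sub
    (measurable_Y0c.comp (measurable_pi_apply (Fin.last n)))

lemma memE.of_absolutelyContinuous {P Q : ProbabilityMeasure (FullData p)} (hP : memE P)
    (h : (Q : Measure (FullData p)) ≪ P) : memE Q := by
  obtain ⟨⟨j, hj⟩, h1, h0⟩ := hP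
  exact ⟨⟨j, (h.map (measurable_Xc_apply j)).trans hj⟩,
    fun y => (h.map measurable_Y1c) (h1 y), fun y => (h.map measurable_Y0c) (h0 y)⟩

lemma memE.measure_Xc_preimage_singleton {P : ProbabilityMeasure (FullData p)} (hP : memE P)
    (x : Fin p → ℝ) : (P : Measure (FullData p)) (Xc ⁻¹' {x}) = 0 := by
  obtain ⟨⟨j, hj⟩, -, -⟩ := hP
  have h0 := hj (Real.volume_singleton (a := x j))
  rw [Measure.map_apply (measurable_Xc_apply j) (measurableSet_singleton _)] at h0
  refine measure_mono_null (fun ω hω => ?_) h0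
  have hω' : Xc ω = x := hω
  simp [hω']

/-- Conditioning on the event that `T` equals a function of `X` produces a strongly ignorable
law. -/
lemma memPSI_cond {P : ProbabilityMeasure (FullData p)} (hP : memE P) {g : (Fin p → ℝ) → Bool}
    (hg : Measurable g) (h0 : (P : Measure (FullData p)) {ω | Tc ω = g (Xc ω)} ≠ 0) :
    memPSI ⟨(P : Measure (FullData p))[|{ω | Tc ω = g (Xc ω)}],
      cond_isProbabilityMeasure h0⟩ := by
  refine ⟨hP.of_absolutelyContinuous cond_absolutelyContinuous, ?_⟩
  have : IsProbabilityMeasure ((P : Measure (FullData p))[|{ω | Tc ω = g (Xc ω)}]) :=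
    cond_isProbabilityMeasure h0
  exact condIndepFun_of_ae_eq_measurable (g' := fun ω => g (Xc ω))
    (μ := (P : Measure (FullData p))[|{ω | Tc ω = g (Xc ω)}])
    (measurable_Y1c.prodMk measurable_Y0c) measurable_Tc (hg.comp (comap_measurable Xc))
    (ae_cond_of_forall_mem
      (measurableSet_eq_fun measurable_Tc (hg.comp measurable_Xc)) fun ω hω => hω)

/-- A test of level `a` over the strong-ignorability class has level `a` over the whole class
`memE`. -/
lemma jointLaw_le_of_forall_memPSI (n : ℕ) {A : Set (Fin (n + 1) → FullData p)}
    (hA : MeasurableSet A) {a : ENNReal} (ha : a ≠ ⊤)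
    (h : ∀ P : ProbabilityMeasure (FullData p), memPSI P → jointLaw n P A ≤ a)
    {P : ProbabilityMeasure (FullData p)} (hP : memE P) : jointLaw n P A ≤ a := by
  set M := jointLaw n P with hM
  have : IsProbabilityMeasure M := by rw [hM, jointLaw]; infer_instance
  let hash : (m : ℕ) → (Fin p → ℝ) → Fin m → Bool :=
    fun m x k => MeasurableSpace.mapNatBool (Fin p → ℝ) x k
  have hhash : ∀ m, Measurable (hash m) := fun m => measurable_pi_lambda _ fun k =>
    (measurable_pi_apply (k : ℕ)).comp (MeasurableSpace.measurable_mapNatBool _)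
  let coll : ℕ → Set (Fin (n + 1) → FullData p) :=
    fun m => {ω | ¬ Function.Injective fun i => hash m (Xc (ω i))}
  have hbound : ∀ m, M A ≤ a + (a * 2 ^ (n + 1) + 1) * M (coll m) := by
    intro m
    refine measure_le_add_collision M ((hhash m).comp measurable_Xc) measurable_Tc hA fun ε => ?_
    set B : Set (FullData p) := {ω | Tc ω = ε (hash m (Xc ω))} with hBdef
    have hg : Measurable fun x => ε (hash m x) := Measurable.of_discrete.comp (hhash m)
    have hB : MeasurableSet B := measurableSet_eq_fun measurable_Tc (hg.comp measurable_Xc)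
    have hBpi : {ω : Fin (n + 1) → FullData p |
        ∀ i, Tc (ω i) = ε ((hash m ∘ Xc) (ω i))} = Set.univ.pi fun _ => B := by
      ext ω
      simp [B]
    rw [hBpi]
    have hBpi_meas : MeasurableSet (Set.univ.pi fun _ : Fin (n + 1) => B) :=
      MeasurableSet.univ_pi fun _ => hB
    by_cases h0 : (P : Measure (FullData p)) B = 0
    · have : M (Set.univ.pi fun _ => B) = 0 := by
        rw [hM, jointLaw, Measure.pi_pi]
        simp [h0]
      rw [this, mul_zero, nonpos_iff_eq_zero]
      exact measure_mono_null Set.inter_subset_right this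
    · have hQ : Measure.pi (fun _ : Fin (n + 1) => (P : Measure (FullData p))[|B]) A ≤ a :=
        h _ (memPSI_cond hP hg h0)
      rw [pi_cond_eq _ hB] at hQ
      rw [Set.inter_comm, ← cond_mul_eq_inter hBpi_meas]
      gcongr
      exact hQ
  have hlim : Tendsto (fun m => M (coll m)) atTop (nhds 0) := by
    have hmeas : ∀ m, MeasurableSet (coll m) := fun m =>
      (measurable_pi_lambda (fun ω : Fin (n + 1) → FullData p => fun i => hash m (Xc (ω i)))
        fun i => (hhash m).comp (measurable_Xc.comp (measurable_pi_apply i)))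
        (Set.toFinite {v | ¬ Function.Injective v}).measurableSet
    have hanti : Antitone coll := by
      intro m m' hmm ω hω hinj
      refine hω fun i j hij => hinj ?_
      funext k
      exact congrFun hij (Fin.castLE hmm k)
    have hnull : M (⋂ m, coll m) = 0 := by
      refine measure_mono_null ?_ (measure_pi_not_injective_eq_zero (N := n + 1)
        (P : Measure (FullData p)) measurable_Xc hP.measure_Xc_preimage_singleton)
      intro ω hω hinj
      have hev : ∀ᶠ m in atTop, ∀ i j : Fin (n + 1), i ≠ j →
          hash m (Xc (ω i)) ≠ hash m (Xc (ω j)) := by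
        rw [eventually_all]
        intro i
        rw [eventually_all]
        intro j
        by_cases hij : i = j
        · simp [hij]
        · have hne : Xc (ω i) ≠ Xc (ω j) := fun e => hij (hinj e)
          obtain ⟨k, hk⟩ := Function.ne_iff.1
            ((MeasurableSpace.injective_mapNatBool (Fin p → ℝ)).ne hne)
          filter_upwards [eventually_gt_atTop k] with m hm _ e
          exact hk (congrFun e ⟨k, hm⟩)
      obtain ⟨m, hm⟩ := hev.exists
      exact Set.mem_iInter.1 hω m fun i j e => by_contra fun hij => hm i j hij e
    rw [← hnull]
    exact tendsto_measure_iInter_atTop (fun m => (hmeas m).nullMeasurableSet) hanti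
      ⟨0, measure_ne_top _ _⟩
  have hc : a * 2 ^ (n + 1) + 1 ≠ ⊤ := by finiteness
  have hlim' := (ENNReal.Tendsto.const_mul hlim (Or.inr hc)).const_add a
  rw [mul_zero, add_zero] at hlim'
  exact ge_of_tendsto' hlim' hbound

/-- Replace the unobserved potential outcome so that the treatment effect equals `y`. -/
def imputeEffect (y : ℝ) (ω : FullData p) : FullData p :=
  if Tc ω then (Xc ω, Y1c ω, Y1c ω - y, Tc ω) else (Xc ω, Y0c ω + y, Y0c ω, Tc ω)

lemma measurable_imputeEffect (y : ℝ) : Measurable (imputeEffect (p := p) y) :=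
  Measurable.ite (measurable_Tc (measurableSet_singleton true))
    (measurable_Xc.prodMk
      (measurable_Y1c.prodMk ((measurable_Y1c.sub_const y).prodMk measurable_Tc)))
    (measurable_Xc.prodMk
      ((measurable_Y0c.add_const y).prodMk (measurable_Y0c.prodMk measurable_Tc)))

lemma Xc_imputeEffect (y : ℝ) (ω : FullData p) : Xc (imputeEffect y ω) = Xc ω := by
  unfold imputeEffect; split_ifs <;> rfl

lemma obs_imputeEffect (y : ℝ) (ω : FullData p) : obs (imputeEffect y ω) = obs ω := by
  unfold imputeEffect
  split_ifs with h <;> simp_all [obs, Tc, Xc, Y1c, Y0c]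

lemma Y1c_sub_Y0c_imputeEffect (y : ℝ) (ω : FullData p) :
    Y1c (imputeEffect y ω) - Y0c (imputeEffect y ω) = y := by
  unfold imputeEffect
  split_ifs <;> simp [Y1c, Y0c]

lemma obsData_imputeEffect (n : ℕ) (y : ℝ) (ω : Fin (n + 1) → FullData p) :
    obsData n (fun i => imputeEffect y (ω i)) = obsData n ω :=
  funext fun _ => obs_imputeEffect y _

lemma memE.map_imputeEffect {P : ProbabilityMeasure (FullData p)} (hP : memE P) (y : ℝ) :
    memE (P.map (measurable_imputeEffect y).aemeasurable) := by
  obtain ⟨⟨j, hj⟩, h1, h0⟩ := hP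
  have hY1 : ∀ z, (P : Measure (FullData p)) (Y1c ⁻¹' {z}) = 0 := fun z => by
    rw [← Measure.map_apply measurable_Y1c (measurableSet_singleton z), h1]
  have hY0 : ∀ z, (P : Measure (FullData p)) (Y0c ⁻¹' {z}) = 0 := fun z => by
    rw [← Measure.map_apply measurable_Y0c (measurableSet_singleton z), h0]
  refine ⟨⟨j, ?_⟩, fun z => ?_, fun z => ?_⟩
  · rw [ProbabilityMeasure.toMeasure_map, Measure.map_map (measurable_Xc_apply j) (measurable_imputeEffect y)]
    simpa only [Function.comp_def, Xc_imputeEffect] using hj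
  · rw [ProbabilityMeasure.toMeasure_map, Measure.map_map measurable_Y1c
      (measurable_imputeEffect y), Measure.map_apply
      (measurable_Y1c.comp (measurable_imputeEffect y)) (measurableSet_singleton z)]
    refine measure_mono_null (fun ω hω => ?_) (measure_union_null (hY1 z) (hY0 (z - y)))
    have hω' : Y1c (imputeEffect y ω) = z := hω
    unfold imputeEffect at hω'
    split_ifs at hω'
    · exact Or.inl hω'
    · exact Or.inr (eq_sub_of_add_eq hω')
  · rw [ProbabilityMeasure.toMeasure_map, Measure.map_map measurable_Y0c
      (measurable_imputeEffect y), Measure.map_apply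
      (measurable_Y0c.comp (measurable_imputeEffect y)) (measurableSet_singleton z)]
    refine measure_mono_null (fun ω hω => ?_) (measure_union_null (hY1 (z + y)) (hY0 z))
    have hω' : Y0c (imputeEffect y ω) = z := hω
    unfold imputeEffect at hω'
    split_ifs at hω'
    · exact Or.inl (eq_add_of_sub_eq hω')
    · exact Or.inr hω'

lemma jointLaw_map_imputeEffect (n : ℕ) (P : ProbabilityMeasure (FullData p)) (y : ℝ) :
    jointLaw n (P.map (measurable_imputeEffect y).aemeasurable)
      = (jointLaw n P).map fun ω i => imputeEffect y (ω i) := by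
  have := fun _ : Fin (n + 1) => Measure.isProbabilityMeasure_map
    (μ := (P : Measure (FullData p))) (measurable_imputeEffect y).aemeasurable
  exact (Measure.pi_map_pi fun _ => (measurable_imputeEffect y).aemeasurable).symm

end FullData

/-- If a prediction set `Ĉ_{n,α}` (a jointly measurable, set-valued map built
from the observed data) satisfies the uniform finite-sample coverage guarantee
`sup_{P ∈ P_SI} P_P(Δ ∉ Ĉ_{n,α}(X)) ≤ α` for some `α ∈ (0,1)`, then for every `P ∈ P_SI` and
every `y ∈ ℝ` we have `P_P(y ∉ Ĉ_{n,α}(X)) ≤ α`, and consequently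
`E_P[length(Ĉ_{n,α}(X))] = ∞`. -/
theorem finite_sample_impossibility {p : ℕ} (n : ℕ)
    (C : (Fin n → Obs p) → (Fin p → ℝ) → Set ℝ)
    (hC : MeasurableSet {q : (Fin n → Obs p) × (Fin p → ℝ) × ℝ | q.2.2 ∈ C q.1 q.2.1})
    (α : ℝ) (hα : α ∈ Set.Ioo (0 : ℝ) 1)
    (hcov : ∀ P : ProbabilityMeasure (FullData p), memPSI P →
      jointLaw n P {ω | testITE n ω ∉ C (obsData n ω) (testX n ω)} ≤ ENNReal.ofReal α) :
    ∀ P : ProbabilityMeasure (FullData p), memPSI P →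
      (∀ y : ℝ,
        jointLaw n P {ω | y ∉ C (obsData n ω) (testX n ω)} ≤ ENNReal.ofReal α) ∧
      ∫⁻ ω, volume (C (obsData n ω) (testX n ω)) ∂(jointLaw n P) = ⊤ := by
  intro P hP
  have hmiss : MeasurableSet
      {ω : Fin (n + 1) → FullData p | testITE n ω ∉ C (obsData n ω) (testX n ω)} :=
    ((measurable_obsData n).prodMk ((measurable_testX n).prodMk (measurable_testITE n))) hC.compl
  have hpoint : ∀ y : ℝ,
      jointLaw n P {ω | y ∉ C (obsData n ω) (testX n ω)} ≤ ENNReal.ofReal α := by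
    intro y
    have key := jointLaw_le_of_forall_memPSI n hmiss ENNReal.ofReal_ne_top hcov
      (hP.1.map_imputeEffect y)
    have hmap : Measurable fun (ω : Fin (n + 1) → FullData p) i => imputeEffect y (ω i) :=
      measurable_pi_lambda _ fun i => (measurable_imputeEffect y).comp (measurable_pi_apply i)
    rw [jointLaw_map_imputeEffect, Measure.map_apply hmap hmiss] at key
    simpa only [Set.preimage_ofPred_eq, testITE, testX, Y1c_sub_Y0c_imputeEffect,
      Xc_imputeEffect, obsData_imputeEffect] using key
  refine ⟨hpoint, ?_⟩
  have : IsProbabilityMeasure (jointLaw n P) := by rw [jointLaw]; infer_instance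
  have hgraph : MeasurableSet {q : (Fin (n + 1) → FullData p) × ℝ |
      q.2 ∈ C (obsData n q.1) (testX n q.1)} :=
    (((measurable_obsData n).comp measurable_fst).prodMk
      (((measurable_testX n).comp measurable_fst).prodMk measurable_snd)) hC
  have hswap : ∫⁻ ω, volume (C (obsData n ω) (testX n ω)) ∂(jointLaw n P)
      = ∫⁻ y, jointLaw n P {ω | y ∈ C (obsData n ω) (testX n ω)} :=
    (Measure.prod_apply (μ := jointLaw n P) (ν := volume) hgraph).symm.trans
      (Measure.prod_apply_symm hgraph)
  have hhit : ∀ y : ℝ, 1 - ENNReal.ofReal α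
      ≤ jointLaw n P {ω | y ∈ C (obsData n ω) (testX n ω)} := by
    intro y
    have hmeas : MeasurableSet {ω | y ∈ C (obsData n ω) (testX n ω)} :=
      measurable_prodMk_right hgraph
    have hadd := prob_add_prob_compl (μ := jointLaw n P) hmeas
    rw [← hadd]
    exact tsub_le_iff_right.2 (add_le_add_right (hpoint y) _)
  have hpos : 1 - ENNReal.ofReal α ≠ 0 :=
    (tsub_pos_of_lt (ENNReal.ofReal_lt_one.2 hα.2)).ne'
  rw [hswap, eq_top_iff]
  calc ⊤ = ∫⁻ _ : ℝ, (1 - ENNReal.ofReal α) := by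
        rw [lintegral_const, Real.volume_univ, ENNReal.mul_top hpos]
    _ ≤ _ := lintegral_mono hhit

end
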